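/- Let G be a distance-regular graph of diameter 3 with intersection array {k, b₁, b₂; 1, c₂, c₃}, with distinct adjacency eigenvalues k > θ₁ > θ₂ > θ₃, and let q be a real number with q ∈ {q₁, q₂, q₃} and either q > 0 or q ≤ −1. Then the q-distance matrix 𝔻_q has exactly three distinct eigenvalues. -/

import Mathlib

open Matrix

variable {V : Type*} [Fintype V] [DecidableEq V]

/-- The distance-`i` matrix of a graph: the `(x,y)` entry is 1 if `dist x y = i`, else 0. -/
noncomputable def distM (G : SimpleGraph V) (i : ℕ) : Matrix V V ℝ :=
  Matrix.of fun x y => if G.dist x y = i then (1 : ℝ) else 0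

/-- The `q`-distance matrix `𝔻_q = ∑_{i=1}^D (1 + 1/q + ⋯ + 1/q^{i-1}) • A_i`. -/
noncomputable def qDist (G : SimpleGraph V) (D : ℕ) (q : ℝ) : Matrix V V ℝ :=
  ∑ i ∈ Finset.Icc 1 D, (∑ j ∈ Finset.range i, (1 / q) ^ j) • distM G i

/-- `G` is distance-regular with diameter `D` and intersection numbers `b i`, `c i`
(with `c 1 = 1`): for any vertices `x, y` at distance `i ≤ D`, the number of neighbors
of `y` at distance `i - 1` from `x` is `c i` and the number of neighbors of `y` at
distance `i + 1` from `x` is `b i`. -/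
def IsDRG (G : SimpleGraph V) (D : ℕ) (b c : ℕ → ℕ) : Prop :=
  G.Connected ∧
  (∀ x y : V, G.dist x y ≤ D) ∧
  (∃ x y : V, G.dist x y = D) ∧
  c 1 = 1 ∧
  ∀ i ≤ D, ∀ x y : V, G.dist x y = i →
    ({z : V | G.Adj y z ∧ G.dist x z = i - 1} : Set V).ncard = c i ∧
    ({z : V | G.Adj y z ∧ G.dist x z = i + 1} : Set V).ncard = b i

/-- `a i = k - b i - c i` as a real number, where `k = b 0`. -/
noncomputable def aInt (b c : ℕ → ℕ) (i : ℕ) : ℝ := (b 0 : ℝ) - (b i : ℝ) - (c i : ℝ)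

/-!
On the constants `𝔻_q` acts by its row sum. On a `θ`-eigenvector of `A₁` with `θ ≠ k`, which is
orthogonal to the constants, it acts by a quadratic polynomial in `θ` whose values at `x ≠ y`
agree exactly when `x + y = a₁ - c₂(q + 1)`. The eigenvalues other than `k` are the roots of a
monic cubic, so `θ₁ + θ₂ + θ₃ = a₁ + a₃ - b₂ - c₂`; hence `q = q_l` says precisely that the two
eigenvalues other than `θ_l` satisfy this condition, and the three values collapse to two.
Finally, `q > 0` or `q ≤ -1` makes the entries of `𝔻_q` nonnegative, and positive on edges, so by
connectedness its row sum is a simple eigenvalue, different from those two.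
-/

section MatrixSpectrum

variable {ι : Type*} [Fintype ι]

theorem mem_spectrum_iff_exists_mulVec_eq_smul [DecidableEq ι] {K : Type*} [Field K]
    {M : Matrix ι ι K} {μ : K} : μ ∈ spectrum K M ↔ ∃ v : ι → K, v ≠ 0 ∧ M *ᵥ v = μ • v := by
  rw [← Matrix.spectrum_toLin', ← Module.End.hasEigenvalue_iff_mem_spectrum,
    Module.End.HasEigenvalue, Module.End.HasUnifEigenvalue, Submodule.ne_bot_iff]
  simp only [Module.End.mem_genEigenspace_one, Matrix.toLin'_apply, and_comm]

theorem spectrum_eq_image_of_mulVec_eq_smul [DecidableEq ι] {𝕜 : Type*} [RCLike 𝕜]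
    {A M : Matrix ι ι 𝕜} (hA : A.IsHermitian) {f : ℝ → 𝕜}
    (hM : ∀ (θ : ℝ) (v : ι → 𝕜), A *ᵥ v = θ • v → M *ᵥ v = f θ • v) :
    spectrum 𝕜 M = f '' spectrum ℝ A := by
  set U := hA.eigenvectorUnitary
  have hMU : M * (U : Matrix ι ι 𝕜) = U * diagonal (f ∘ hA.eigenvalues) := by
    ext i j
    have hj := congrFun (hM _ _ (hA.mulVec_eigenvectorBasis j)) i
    rw [Matrix.mul_diagonal, mul_comm]
    exact hj
  have hconj : M = Unitary.conjStarAlgAut 𝕜 _ U (diagonal (f ∘ hA.eigenvalues)) := by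
    rw [Unitary.conjStarAlgAut_apply, ← hMU, mul_assoc, Unitary.mul_star_self_of_mem U.2, mul_one]
  rw [hconj, AlgEquiv.spectrum_eq, spectrum_diagonal, Set.range_comp,
    hA.spectrum_real_eq_range_eigenvalues]

theorem dotProduct_eq_zero_of_vecMul_of_mulVec {R : Type*} [CommRing R] [NoZeroDivisors R]
    {M : Matrix ι ι R} {u v : ι → R} {κ θ : R} (hu : u ᵥ* M = κ • u) (hv : M *ᵥ v = θ • v)
    (hne : κ ≠ θ) : u ⬝ᵥ v = 0 := by
  have h : κ * (u ⬝ᵥ v) = θ * (u ⬝ᵥ v) := by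
    simpa only [hu, hv, smul_dotProduct, dotProduct_smul, smul_eq_mul] using
      (dotProduct_mulVec u M v).symm
  by_contra h0
  exact hne (mul_right_cancel₀ h0 h)

-- If `v` is maximal at `x`, then `(M v) x = r v x` says `∑ y, M x y * (max v - v y) = 0`, a sum of
-- nonnegative terms, so `v` is maximal at every neighbour of `x`.
theorem exists_eq_const_of_mulVec_eq_smul {R : Type*} [CommRing R] [LinearOrder R]
    [IsStrictOrderedRing R] {G : SimpleGraph ι} (hG : G.Connected) {M : Matrix ι ι R} {r : R}
    (hM : ∀ x y, 0 ≤ M x y) (hadj : ∀ x y, G.Adj x y → 0 < M x y) (hr : ∀ x, ∑ y, M x y = r)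
    {v : ι → R} (hv : M *ᵥ v = r • v) : ∃ t, v = fun _ ↦ t := by
  have := hG.nonempty
  obtain ⟨m, hm⟩ := Finite.exists_max v
  have maximal_of_adj : ∀ x y, G.Adj x y → v x = v m → v y = v m := by
    intro x y hxy hx
    have hsum : ∑ z, M x z * (v m - v z) = 0 := by
      have hvx : ∑ z, M x z * v z = r * v x := congrFun hv x
      simp only [mul_sub, Finset.sum_sub_distrib, ← Finset.sum_mul, hr, hvx, hx, sub_self]
    have hterm := (Fintype.sum_eq_zero_iff_of_nonneg fun z ↦
      mul_nonneg (hM x z) (sub_nonneg.2 (hm z))).1 hsum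
    have hy : M x y * (v m - v y) = 0 := congrFun hterm y
    exact (sub_eq_zero.1 ((mul_eq_zero.1 hy).resolve_left (hadj x y hxy).ne')).symm
  refine ⟨v m, funext fun y ↦ ?_⟩
  have hreach := (SimpleGraph.reachable_iff_reflTransGen m y).1 (hG.preconnected m y)
  induction hreach with
  | refl => rfl
  | tail _ hxy ih => exact maximal_of_adj _ _ hxy ih

end MatrixSpectrum

theorem geom_sum_nonneg_of_neg_one_le {R : Type*} [Ring R] [LinearOrder R]
    [IsStrictOrderedRing R] {x : R} (hx : -1 ≤ x) (n : ℕ) : 0 ≤ ∑ i ∈ Finset.range n, x ^ i := by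
  rcases hx.eq_or_lt with rfl | hx
  · rw [neg_one_geom_sum]
    split_ifs <;> simp
  · rcases eq_or_ne n 0 with rfl | hn
    · simp
    · exact (geom_sum_pos' (neg_lt_iff_pos_add.1 hx) hn).le

theorem add_add_eq_neg_of_cubic_eq_zero {R : Type*} [CommRing R] [IsDomain R] {x y z p r s : R}
    (hxy : x ≠ y) (hxz : x ≠ z) (hyz : y ≠ z) (hx : x ^ 3 + p * x ^ 2 + r * x + s = 0)
    (hy : y ^ 3 + p * y ^ 2 + r * y + s = 0) (hz : z ^ 3 + p * z ^ 2 + r * z + s = 0) :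
    x + y + z = -p := by
  have hxy' : x ^ 2 + x * y + y ^ 2 + p * (x + y) + r = 0 :=
    mul_left_cancel₀ (sub_ne_zero.2 hxy) (by linear_combination hx - hy)
  have hxz' : x ^ 2 + x * z + z ^ 2 + p * (x + z) + r = 0 :=
    mul_left_cancel₀ (sub_ne_zero.2 hxz) (by linear_combination hx - hz)
  exact mul_left_cancel₀ (sub_ne_zero.2 hyz) (by linear_combination hxy' - hxz')

section Distance

omit [Fintype V] [DecidableEq V]

variable {G : SimpleGraph V} {D : ℕ}

theorem distM_isSymm (G : SimpleGraph V) (i : ℕ) : (distM G i).IsSymm := by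
  ext x y
  simp [distM, G.dist_comm (u := x)]

theorem distM_zero [DecidableEq V] (hG : G.Connected) : distM G 0 = 1 := by
  ext x y
  simp [distM, Matrix.one_apply, hG.dist_eq_zero_iff]

theorem sum_distM (hD : ∀ x y, G.dist x y ≤ D) :
    ∑ i ∈ Finset.range (D + 1), distM G i = Matrix.of fun _ _ ↦ 1 := by
  ext x y
  simp [distM, Matrix.sum_apply, hD x y]

theorem distM_eq_zero_of_lt (hD : ∀ x y, G.dist x y ≤ D) {i : ℕ} (hi : D < i) :
    distM G i = 0 := by
  ext x y
  simp [distM, ((hD x y).trans_lt hi).ne]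

theorem distM_one_mul_distM_apply [Fintype V] (G : SimpleGraph V) (i : ℕ) (x y : V) :
    (distM G 1 * distM G i) x y = ({z | G.Adj x z ∧ G.dist y z = i} : Set V).ncard := by
  classical
  simp [distM, Matrix.mul_apply, Set.ncard_eq_toFinset_card', G.dist_comm (v := y), ← ite_and,
    and_comm]

theorem qDist_apply {q : ℝ} {x y : V} (hxy : G.dist x y ≤ D) :
    qDist G D q x y = ∑ j ∈ Finset.range (G.dist x y), (1 / q) ^ j := by
  rcases Nat.eq_zero_or_pos (G.dist x y) with h | h
  · rw [h]
    simp [qDist, distM, Matrix.sum_apply, h]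
  · simp [qDist, distM, Matrix.sum_apply, hxy, Nat.one_le_iff_ne_zero.2 h.ne']

theorem qDist_nonneg (hD : ∀ x y, G.dist x y ≤ D) {q : ℝ} (hq : 0 < q ∨ q ≤ -1) (x y : V) :
    0 ≤ qDist G D q x y := by
  rw [qDist_apply (hD x y)]
  apply geom_sum_nonneg_of_neg_one_le
  rcases hq with hq | hq
  · linarith [one_div_pos.2 hq]
  · rw [le_div_iff_of_neg (by linarith)]
    linarith

theorem qDist_pos_of_adj {q : ℝ} {x y : V} (hD : G.dist x y ≤ D) (hxy : G.Adj x y) :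
    0 < qDist G D q x y := by
  simp [qDist_apply hD, SimpleGraph.dist_eq_one_iff_adj.2 hxy]

end Distance

/-- The eigenvalue of the distance-`2` matrix `A₂` on the `θ`-eigenspace of `A₁`, read off from
`A₁² = k + a₁A₁ + c₂A₂`. -/
noncomputable def distTwoEigenvalue (b c : ℕ → ℕ) (θ : ℝ) : ℝ :=
  (θ ^ 2 - aInt b c 1 * θ - b 0) / c 2

/-- The eigenvalue of `𝔻_q`, for diameter `3`, on a common eigenvector of `A₁` and of the all-ones
matrix `J`, with eigenvalues `θ` and `j` respectively. The coefficient `j - 1 - θ - v₂(θ)` is the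
eigenvalue of `A₃ = J - 1 - A₁ - A₂`. -/
noncomputable def qDistEigenvalue (b c : ℕ → ℕ) (q j θ : ℝ) : ℝ :=
  θ + (1 + 1 / q) * distTwoEigenvalue b c θ +
    (1 + 1 / q + (1 / q) ^ 2) * (j - 1 - θ - distTwoEigenvalue b c θ)

theorem qDistEigenvalue_eq_iff {b c : ℕ → ℕ} (hc : c 2 ≠ 0) {q : ℝ} (hq : q ≠ 0) {j x y : ℝ} :
    qDistEigenvalue b c q j x = qDistEigenvalue b c q j y ↔
      x = y ∨ x + y = aInt b c 1 - c 2 * (q + 1) := by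
  have hc' : (c 2 : ℝ) ≠ 0 := Nat.cast_ne_zero.2 hc
  have hdiff : qDistEigenvalue b c q j x - qDistEigenvalue b c q j y =
      -((1 / q) ^ 2 / c 2) * ((x - y) * (x + y - (aInt b c 1 - c 2 * (q + 1)))) := by
    unfold qDistEigenvalue distTwoEigenvalue
    field_simp
    ring
  rw [← sub_eq_zero, hdiff]
  simp [hq, hc, sub_eq_zero]

namespace IsDRG

variable {G : SimpleGraph V} {D : ℕ} {b c : ℕ → ℕ}

section Intersection

omit [Fintype V] [DecidableEq V]

theorem connected (hG : IsDRG G D b c) : G.Connected := hG.1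

theorem dist_le (hG : IsDRG G D b c) (x y : V) : G.dist x y ≤ D := hG.2.1 x y

theorem ncard_dist_eq_succ (hG : IsDRG G D b c) (x y : V) :
    ({z | G.Adj y z ∧ G.dist x z = G.dist x y + 1} : Set V).ncard = b (G.dist x y) :=
  (hG.2.2.2.2 _ (hG.dist_le x y) x y rfl).2

theorem ncard_dist_eq_pred (hG : IsDRG G D b c) {x y : V} {i : ℕ} (hi : G.dist x y = i + 1) :
    ({z | G.Adj y z ∧ G.dist x z = i} : Set V).ncard = c (i + 1) :=
  (hG.2.2.2.2 _ (hi ▸ hG.dist_le x y) x y hi).1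

theorem ncard_neighborSet (hG : IsDRG G D b c) (x : V) : (G.neighborSet x).ncard = b 0 := by
  rw [← G.dist_self (v := x), ← hG.ncard_dist_eq_succ x x]
  congr 1
  ext z
  simp

theorem ncard_dist_eq_self [Finite V] (hG : IsDRG G D b c) {x y : V} {i : ℕ}
    (hi : G.dist x y = i + 1) :
    (({z | G.Adj y z ∧ G.dist x z = i + 1} : Set V).ncard : ℝ) = aInt b c (i + 1) := by
  let S (j : ℕ) : Set V := {z | G.Adj y z ∧ G.dist x z = j}
  have hunion : G.neighborSet y = S i ∪ S (i + 1) ∪ S (i + 2) := by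
    ext z
    have (h : G.Adj y z) := h.diff_dist_adj (u := x)
    grind [SimpleGraph.mem_neighborSet]
  have hdisj {j l : ℕ} (hjl : j ≠ l) : Disjoint (S j) (S l) :=
    Set.disjoint_left.2 fun z hj hl ↦ hjl (hj.2.symm.trans hl.2)
  have hcard := hG.ncard_neighborSet y
  rw [hunion, Set.ncard_union_eq (Set.disjoint_union_left.2 ⟨hdisj (by lia), hdisj (by lia)⟩),
    Set.ncard_union_eq (hdisj (by lia)), hG.ncard_dist_eq_pred hi] at hcard
  have hsucc := hG.ncard_dist_eq_succ x y
  rw [hi] at hsucc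
  rw [hsucc] at hcard
  rw [aInt, ← hcard]
  push_cast
  ring

theorem c_succ_ne_zero [Finite V] (hG : IsDRG G D b c) {i : ℕ} (hi : i < D) : c (i + 1) ≠ 0 := by
  obtain ⟨x, y, hxy⟩ := hG.2.2.1
  obtain ⟨p, hp⟩ := hG.connected.exists_walk_length_eq_dist x y
  have hdist : ∀ j ≤ D, G.dist x (p.getVert j) = j := by
    intro j hj
    rw [← SimpleGraph.length_eq_dist_of_subwalk hp (p.isSubwalk_take j),
      SimpleGraph.Walk.take_length]
    lia
  have hadj : G.Adj (p.getVert (i + 1)) (p.getVert i) :=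
    (p.adj_getVert_succ (by lia)).symm
  rw [← hG.ncard_dist_eq_pred (hdist (i + 1) hi)]
  exact Set.ncard_ne_zero_of_mem ⟨hadj, hdist i hi.le⟩

end Intersection

section AdjacencyMatrix

omit [DecidableEq V]

theorem distM_one_mul_distM_succ (hG : IsDRG G D b c) (i : ℕ) :
    distM G 1 * distM G (i + 1) =
      (b i : ℝ) • distM G i + aInt b c (i + 1) • distM G (i + 1) +
        (c (i + 2) : ℝ) • distM G (i + 2) := by
  ext x y
  rw [distM_one_mul_distM_apply]
  simp only [Matrix.add_apply, Matrix.smul_apply, distM, Matrix.of_apply, G.dist_comm (u := x),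
    smul_eq_mul, mul_ite, mul_one, mul_zero]
  by_cases hb : G.dist y x = i
  · have := hG.ncard_dist_eq_succ y x
    simp_all
  by_cases ha : G.dist y x = i + 1
  · simpa [ha] using hG.ncard_dist_eq_self ha
  by_cases hc : G.dist y x = i + 2
  · simpa [hc] using hG.ncard_dist_eq_pred hc
  have hempty : {z | G.Adj x z ∧ G.dist y z = i + 1} = ∅ := by
    ext z
    have (h : G.Adj x z) := h.diff_dist_adj (u := y)
    grind
  simp [ha, hb, hc, hempty]

theorem distM_one_mulVec_one (hG : IsDRG G D b c) :
    distM G 1 *ᵥ (1 : V → ℝ) = (b 0 : ℝ) • (1 : V → ℝ) := by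
  ext x
  classical
  simp [distM, Matrix.mulVec, dotProduct, ← hG.ncard_neighborSet x, Set.ncard_eq_toFinset_card']

theorem sum_eq_zero_of_mulVec (hG : IsDRG G D b c) {θ : ℝ} (hθ : θ ≠ b 0) {v : V → ℝ}
    (hv : distM G 1 *ᵥ v = θ • v) : ∑ x, v x = 0 := by
  have hleft : (1 : V → ℝ) ᵥ* distM G 1 = (b 0 : ℝ) • (1 : V → ℝ) := by
    rw [← Matrix.mulVec_transpose, (distM_isSymm G 1).eq, hG.distM_one_mulVec_one]
  simpa [dotProduct] using dotProduct_eq_zero_of_vecMul_of_mulVec hleft hv hθ.symm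

theorem exists_eq_const_of_mulVec (hG : IsDRG G D b c) {v : V → ℝ}
    (hv : distM G 1 *ᵥ v = (b 0 : ℝ) • v) : ∃ s, v = fun _ ↦ s := by
  refine exists_eq_const_of_mulVec_eq_smul hG.connected (fun x y ↦ ?_) (fun x y hxy ↦ ?_)
    (fun x ↦ ?_) hv
  · rw [distM, Matrix.of_apply]
    positivity
  · simp [distM, hxy]
  · simpa [Matrix.mulVec, dotProduct] using congrFun hG.distM_one_mulVec_one x

end AdjacencyMatrix

section DiameterThree

section EigenvectorAction

omit [DecidableEq V]

theorem distM_two_mulVec (hG : IsDRG G 3 b c) {θ : ℝ} {v : V → ℝ} (hv : distM G 1 *ᵥ v = θ • v) :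
    distM G 2 *ᵥ v = distTwoEigenvalue b c θ • v := by
  classical
  have hc : (c 2 : ℝ) ≠ 0 := Nat.cast_ne_zero.2 (hG.c_succ_ne_zero (by norm_num))
  have hsq := congrArg (· *ᵥ v) (hG.distM_one_mul_distM_succ 0)
  simp only [zero_add, distM_zero hG.connected, ← Matrix.mulVec_mulVec, Matrix.add_mulVec,
    Matrix.smul_mulVec, Matrix.one_mulVec, hv, Matrix.mulVec_smul] at hsq
  ext x
  have hx := congrFun hsq x
  simp only [Pi.add_apply, Pi.smul_apply, smul_eq_mul] at hx
  simp only [Pi.smul_apply, smul_eq_mul, distTwoEigenvalue]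
  field_simp
  linear_combination -hx

theorem distM_three_mulVec (hG : IsDRG G 3 b c) {θ j : ℝ} {v : V → ℝ}
    (hv : distM G 1 *ᵥ v = θ • v) (hj : (fun _ ↦ ∑ x, v x) = j • v) :
    distM G 3 *ᵥ v = (j - 1 - θ - distTwoEigenvalue b c θ) • v := by
  classical
  have hall := congrArg (· *ᵥ v) (sum_distM hG.dist_le)
  have hones : (Matrix.of fun _ _ ↦ 1) *ᵥ v = j • v := by
    rw [← hj]
    ext
    simp [Matrix.mulVec, dotProduct]
  simp only [Finset.sum_range_succ, Finset.sum_range_zero, zero_add, distM_zero hG.connected,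
    Matrix.add_mulVec, Matrix.one_mulVec, hv, hG.distM_two_mulVec hv, hones] at hall
  linear_combination (norm := module) hall

theorem qDist_mulVec (hG : IsDRG G 3 b c) (q : ℝ) {θ j : ℝ} {v : V → ℝ}
    (hv : distM G 1 *ᵥ v = θ • v) (hj : (fun _ ↦ ∑ x, v x) = j • v) :
    qDist G 3 q *ᵥ v = qDistEigenvalue b c q j θ • v := by
  simp [qDist, Finset.sum_Icc_succ_top, Finset.sum_range_succ, Matrix.add_mulVec,
    Matrix.smul_mulVec, hv, hG.distM_two_mulVec hv, hG.distM_three_mulVec hv hj, qDistEigenvalue,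
    add_smul, mul_smul]

theorem qDist_mulVec_of_ne (hG : IsDRG G 3 b c) (q : ℝ) {θ : ℝ} (hθ : θ ≠ b 0) {v : V → ℝ}
    (hv : distM G 1 *ᵥ v = θ • v) : qDist G 3 q *ᵥ v = qDistEigenvalue b c q 0 θ • v :=
  hG.qDist_mulVec q hv (by ext; simp [hG.sum_eq_zero_of_mulVec hθ hv])

theorem qDist_mulVec_one (hG : IsDRG G 3 b c) (q : ℝ) :
    qDist G 3 q *ᵥ (1 : V → ℝ) =
      qDistEigenvalue b c q (Fintype.card V) (b 0) • (1 : V → ℝ) :=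
  hG.qDist_mulVec q hG.distM_one_mulVec_one (by ext; simp)

end EigenvectorAction

-- Apply `A₁A₃ = b₂A₂ + a₃A₃` to an eigenvector orthogonal to the constants, on which
-- `1 + A₁ + A₂ + A₃` vanishes.
theorem eigenvalue_cubic (hG : IsDRG G 3 b c) {θ : ℝ}
    (hθ : θ ∈ spectrum ℝ (distM G 1) \ {(b 0 : ℝ)}) :
    (θ - aInt b c 3 + b 2) * (θ ^ 2 - aInt b c 1 * θ - b 0) +
      c 2 * (θ - aInt b c 3) * (1 + θ) = 0 := by
  obtain ⟨v, hv0, hv⟩ := mem_spectrum_iff_exists_mulVec_eq_smul.1 hθ.1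
  have hc : (c 2 : ℝ) ≠ 0 := Nat.cast_ne_zero.2 (hG.c_succ_ne_zero (by norm_num))
  have hv3 := hG.distM_three_mulVec hv (j := 0)
    (by ext; simp [hG.sum_eq_zero_of_mulVec hθ.2 hv])
  have hrec := congrArg (· *ᵥ v) (hG.distM_one_mul_distM_succ 2)
  simp only [Nat.reduceAdd, distM_eq_zero_of_lt hG.dist_le (by norm_num : 3 < 4), smul_zero,
    add_zero, ← Matrix.mulVec_mulVec, Matrix.add_mulVec, Matrix.smul_mulVec, hv3,
    Matrix.mulVec_smul, hv, hG.distM_two_mulVec hv, smul_smul, ← add_smul] at hrec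
  have hscalar := smul_left_injective ℝ hv0 hrec
  simp only [distTwoEigenvalue] at hscalar
  field_simp at hscalar
  linear_combination -hscalar

theorem add_add_eigenvalues (hG : IsDRG G 3 b c) {t u w : ℝ} (htu : t ≠ u) (htw : t ≠ w)
    (huw : u ≠ w) (hspec : {t, u, w} ⊆ spectrum ℝ (distM G 1) \ {(b 0 : ℝ)}) :
    t + u + w = aInt b c 1 + aInt b c 3 - b 2 - c 2 := by
  have hroot : ∀ θ ∈ ({t, u, w} : Set ℝ),
      θ ^ 3 + (b 2 + c 2 - aInt b c 1 - aInt b c 3) * θ ^ 2 +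
        (aInt b c 3 * aInt b c 1 - b 2 * aInt b c 1 - b 0 + c 2 - c 2 * aInt b c 3) * θ +
        (aInt b c 3 * b 0 - b 2 * b 0 - c 2 * aInt b c 3) = 0 := by
    intro θ hθ
    linear_combination hG.eigenvalue_cubic (hspec hθ)
  have hvieta := add_add_eq_neg_of_cubic_eq_zero htu htw huw (hroot t (by simp))
    (hroot u (by simp)) (hroot w (by simp))
  linear_combination hvieta

theorem spectrum_qDist (hG : IsDRG G 3 b c) (q : ℝ) :
    spectrum ℝ (qDist G 3 q) = insert (qDistEigenvalue b c q (Fintype.card V) (b 0))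
      (qDistEigenvalue b c q 0 '' (spectrum ℝ (distM G 1) \ {(b 0 : ℝ)})) := by
  set f := Function.update (qDistEigenvalue b c q 0) (b 0)
    (qDistEigenvalue b c q (Fintype.card V) (b 0)) with hf
  have hA : (distM G 1).IsHermitian := isHermitian_iff_isSymm.2 (distM_isSymm G 1)
  have hk : (b 0 : ℝ) ∈ spectrum ℝ (distM G 1) :=
    have := hG.connected.nonempty
    mem_spectrum_iff_exists_mulVec_eq_smul.2 ⟨1, one_ne_zero, hG.distM_one_mulVec_one⟩
  have hqDist : ∀ (θ : ℝ) (v : V → ℝ), distM G 1 *ᵥ v = θ • v → qDist G 3 q *ᵥ v = f θ • v := by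
    intro θ v hv
    rcases eq_or_ne θ (b 0) with rfl | hθ
    · obtain ⟨s, rfl⟩ := hG.exists_eq_const_of_mulVec hv
      have hs : (fun _ : V ↦ s) = s • 1 := by ext; simp
      rw [hs, Matrix.mulVec_smul, hG.qDist_mulVec_one, smul_comm, hf, Function.update_self]
    · rw [hf, Function.update_of_ne hθ, hG.qDist_mulVec_of_ne q hθ hv]
  have hfk : f (b 0) = qDistEigenvalue b c q (Fintype.card V) (b 0) := Function.update_self ..
  have hrest : f '' (spectrum ℝ (distM G 1) \ {(b 0 : ℝ)}) =
      qDistEigenvalue b c q 0 '' (spectrum ℝ (distM G 1) \ {(b 0 : ℝ)}) :=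
    Set.image_congr fun θ hθ ↦ Function.update_of_ne hθ.2 _ _
  rw [spectrum_eq_image_of_mulVec_eq_smul hA hqDist, ← hrest, ← hfk, ← Set.image_insert_eq,
    Set.insert_sdiff_self_of_mem hk]

theorem qDistEigenvalue_card_notMem (hG : IsDRG G 3 b c) {q : ℝ} (hq : 0 < q ∨ q ≤ -1) :
    qDistEigenvalue b c q (Fintype.card V) (b 0) ∉
      qDistEigenvalue b c q 0 '' (spectrum ℝ (distM G 1) \ {(b 0 : ℝ)}) := by
  rintro ⟨θ, hθ, heq⟩
  obtain ⟨v, hv0, hv⟩ := mem_spectrum_iff_exists_mulVec_eq_smul.1 hθ.1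
  have hperron := hG.qDist_mulVec_of_ne q hθ.2 hv
  rw [heq] at hperron
  obtain ⟨s, rfl⟩ := exists_eq_const_of_mulVec_eq_smul hG.connected
    (qDist_nonneg hG.dist_le hq) (fun x y hxy ↦ qDist_pos_of_adj (hG.dist_le x y) hxy)
    (fun x ↦ by simpa [Matrix.mulVec, dotProduct] using congrFun (hG.qDist_mulVec_one q) x) hperron
  have := hG.connected.nonempty
  have hs : s = 0 := by simpa using hG.sum_eq_zero_of_mulVec hθ.2 hv
  exact hv0 (funext fun _ ↦ hs)

theorem ncard_spectrum_qDist (hG : IsDRG G 3 b c) {t u w : ℝ} (htu : t ≠ u) (htw : t ≠ w)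
    (huw : u ≠ w) (hspec : spectrum ℝ (distM G 1) \ {(b 0 : ℝ)} = {t, u, w}) {q : ℝ}
    (hq : q = (t - aInt b c 3 + b 2) / c 2) (hq' : 0 < q ∨ q ≤ -1) :
    (spectrum ℝ (qDist G 3 q)).ncard = 3 := by
  have hc : c 2 ≠ 0 := hG.c_succ_ne_zero (by norm_num)
  have hq0 : q ≠ 0 := by grind
  have hsum : u + w = aInt b c 1 - c 2 * (q + 1) := by
    rw [hq]
    field_simp
    linear_combination hG.add_add_eigenvalues htu htw huw hspec.ge
  have huw' : qDistEigenvalue b c q 0 u = qDistEigenvalue b c q 0 w :=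
    (qDistEigenvalue_eq_iff hc hq0).2 (.inr hsum)
  have htw' : qDistEigenvalue b c q 0 t ≠ qDistEigenvalue b c q 0 w := by
    rw [ne_eq, qDistEigenvalue_eq_iff hc hq0]
    grind
  have himage : qDistEigenvalue b c q 0 '' {t, u, w} =
      {qDistEigenvalue b c q 0 t, qDistEigenvalue b c q 0 w} := by
    simp [Set.image_insert_eq, huw']
  have hnotMem := hG.qDistEigenvalue_card_notMem hq'
  rw [hG.spectrum_qDist, Set.ncard_insert_of_notMem hnotMem, hspec, himage, Set.ncard_pair htw']

end DiameterThree

end IsDRG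

/-- Corollary 3.6(iii): for a distance-regular graph of diameter 3 with
intersection array `{k, b₁, b₂; 1, c₂, c₃}`, distinct adjacency eigenvalues
`k > θ₁ > θ₂ > θ₃`, and a real `q` with `q ∈ {q₁, q₂, q₃}` (where
`q_l = (θ_l − a₃ + b₂)/c₂`) and `q > 0` or `q ≤ −1`, the matrix `𝔻_q` has exactly three
distinct eigenvalues. -/
theorem stmt9 (G : SimpleGraph V) (b c : ℕ → ℕ) (hG : IsDRG G 3 b c)
    (θ₁ θ₂ θ₃ : ℝ) (h1 : (b 0 : ℝ) > θ₁) (h2 : θ₁ > θ₂) (h3 : θ₂ > θ₃)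
    (hspec : spectrum ℝ (distM G 1) = ({(b 0 : ℝ), θ₁, θ₂, θ₃} : Set ℝ))
    (q : ℝ)
    (hq : q ∈ ({(θ₁ - aInt b c 3 + (b 2 : ℝ)) / (c 2 : ℝ),
                (θ₂ - aInt b c 3 + (b 2 : ℝ)) / (c 2 : ℝ),
                (θ₃ - aInt b c 3 + (b 2 : ℝ)) / (c 2 : ℝ)} : Set ℝ))
    (hq' : 0 < q ∨ q ≤ -1) :
    (spectrum ℝ (qDist G 3 q)).ncard = 3 := by
  have hdiff : spectrum ℝ (distM G 1) \ {(b 0 : ℝ)} = {θ₁, θ₂, θ₃} := by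
    rw [hspec, Set.insert_sdiff_self_of_notMem]
    rintro (h | h | (h : _ = _)) <;> linarith
  rcases hq with hq | hq | hq
  · exact hG.ncard_spectrum_qDist h2.ne' (h3.trans h2).ne' h3.ne' hdiff hq hq'
  · refine hG.ncard_spectrum_qDist h2.ne h3.ne' (h3.trans h2).ne' ?_ hq hq'
    rw [hdiff, Set.insert_comm]
  · refine hG.ncard_spectrum_qDist (h3.trans h2).ne h3.ne h2.ne' ?_ hq hq'
    rw [hdiff, Set.pair_comm θ₂, Set.insert_comm]
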